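/- There exists a matrix g ∈ GL(4,ℂ) and a nonzero scalar c ∈ ℂ such that the polynomial f' = x⁴+y⁴+z⁴+t⁴+12xyzt (Mukai's invariant quartic, the Maschke quartic) satisfies f'(g·v) = c·f₀(v) for all v ∈ ℂ⁴; i.e., the quartic surfaces {f' = 0} and {f₀ = 0} in ℙ³(ℂ) are projectively equivalent. Explicitly, the composite of the substitutions x ↦ x-y, y ↦ x+y, z ↦ z-t, t ↦ z+t followed by x ↦ ix, t ↦ it carries f' to 2f₀. -/

import Mathlib

open Matrix Complex MvPolynomial

/-- Mukai's quartic `f₀ = Σ x⁴ − 6 Σ x²y²` in `ℂ[x,y,z,t]`. -/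
noncomputable def f0 : MvPolynomial (Fin 4) ℂ :=
  X 0 ^ 4 + X 1 ^ 4 + X 2 ^ 4 + X 3 ^ 4 -
    6 * (X 0 ^ 2 * X 1 ^ 2 + X 0 ^ 2 * X 2 ^ 2 + X 0 ^ 2 * X 3 ^ 2 +
         X 1 ^ 2 * X 2 ^ 2 + X 1 ^ 2 * X 3 ^ 2 + X 2 ^ 2 * X 3 ^ 2)

/-- The Maschke quartic `f' = x⁴ + y⁴ + z⁴ + t⁴ + 12xyzt`. -/
noncomputable def f' : MvPolynomial (Fin 4) ℂ :=
  X 0 ^ 4 + X 1 ^ 4 + X 2 ^ 4 + X 3 ^ 4 + 12 * (X 0 * X 1 * X 2 * X 3)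

/-- The matrix of the substitution `x ↦ x-y, y ↦ x+y, z ↦ z-t, t ↦ z+t`. -/
def Msub : Matrix (Fin 4) (Fin 4) ℂ := !![1,-1,0,0; 1,1,0,0; 0,0,1,-1; 0,0,1,1]

/-- The matrix of the substitution `x ↦ ix, t ↦ it`. -/
noncomputable def Dsub : Matrix (Fin 4) (Fin 4) ℂ := !![I,0,0,0; 0,1,0,0; 0,0,1,0; 0,0,0,I]

/-- There is `g ∈ GL(4,ℂ)` and `c ≠ 0` with `f'(g·v) = c·f₀(v)` for all `v`, so the
quartics `{f' = 0}` and `{f₀ = 0}` are projectively equivalent; explicitly, the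
composite of `x ↦ x-y, y ↦ x+y, z ↦ z-t, t ↦ z+t` followed by `x ↦ ix, t ↦ it`
carries `f'` to `2f₀`. -/
theorem stmt_16 :
    (∃ g : Matrix (Fin 4) (Fin 4) ℂ, IsUnit g.det ∧
      ∃ c : ℂ, c ≠ 0 ∧ ∀ v : Fin 4 → ℂ, eval (g.mulVec v) f' = c * eval v f0) ∧
    (∀ v : Fin 4 → ℂ, eval ((Msub * Dsub).mulVec v) f' = 2 * eval v f0) := by
  have key : ∀ v : Fin 4 → ℂ, eval ((Msub * Dsub).mulVec v) f' = 2 * eval v f0 := by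
    intro v
    have hI : I ^ 2 = -1 := I_sq
    have h0 : (Msub * Dsub).mulVec v =
        ![I * v 0 - v 1, I * v 0 + v 1, v 2 - I * v 3, v 2 + I * v 3] := by
      rw [← Matrix.mulVec_mulVec]
      ext i
      fin_cases i <;>
        simp [Msub, Dsub, Matrix.mulVec, dotProduct, Fin.sum_univ_four] <;> ring
    rw [h0]
    have e1 : (6 : MvPolynomial (Fin 4) ℂ) = C 6 := (map_ofNat C 6).symm
    have e2 : (12 : MvPolynomial (Fin 4) ℂ) = C 12 := (map_ofNat C 12).symm
    simp only [f', f0, e1, e2, map_add, map_sub, map_mul, map_pow, eval_X, eval_C]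
    simp only [Matrix.cons_val]
    grind
  refine ⟨⟨Msub * Dsub, ?_, 2, two_ne_zero, key⟩, key⟩
  rw [Matrix.det_mul, isUnit_iff_ne_zero]
  have hM : Msub.det = 4 := by
    simp [Msub, Matrix.det_succ_row_zero, Fin.sum_univ_succ, Fin.succAbove]
    try norm_num
  have hD : Dsub.det = -1 := by
    simp [Dsub, Matrix.det_succ_row_zero, Fin.sum_univ_succ, Fin.succAbove]
  rw [hM, hD]
  norm_num
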